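/- Let Δ be a convex lattice polygon with boundary data β, and let γ be a λ-increasing lattice path of length n from p to q contained in Δ that is not β₊-initial. Let k be ANY index with 0 < k < n at which γ makes a left turn, i.e. det(γ(k)−γ(k−1), γ(k+1)−γ(k)) > 0. Let γ′ be the path obtained from γ by deleting the point γ(k), let γ″ be the path obtained by replacing γ(k) with γ(k−1)+γ(k+1)−γ(k), and let T be the triangle with vertices γ(k−1), γ(k), γ(k+1). Then mult₊(γ) = 2·Area(T)·mult₊(γ′) + mult₊(γ″), where the last term is taken to be 0 if γ″ is not contained in Δ. In other words, the positive multiplicity of a lattice path stays the same if at each step of the recursion any left turn is used, not necessarily the first one. -/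

import Mathlib

open Classical

noncomputable section

namespace TropPaths

/-- Lattice points of the plane. -/
abbrev Pt := ℤ × ℤ

/-- The order on `ℤ²` induced by `λ(x,y) = x - εy` for a small irrational `ε > 0`:
`p ≺ q` iff `p₁ < q₁`, or (`p₁ = q₁` and `p₂ > q₂`). -/
def lamLT (p q : Pt) : Prop := p.1 < q.1 ∨ (p.1 = q.1 ∧ q.2 < p.2)

/-- A lattice path, recorded as the list of its points, is `λ`-increasing. -/
def Increasing (γ : List Pt) : Prop := List.Chain' lamLT γ

/-- The determinant of two vectors in `ℤ²`. -/
def det (u v : Pt) : ℤ := u.1 * v.2 - u.2 * v.1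

/-- The `k`-th point of a path (junk value out of range). -/
def pt (γ : List Pt) (k : ℕ) : Pt := γ.getD k (0, 0)

/-- The `k`-th step vector of a path. -/
def stepAt (γ : List Pt) (k : ℕ) : Pt := pt γ (k + 1) - pt γ k

/-- The list of all step vectors of a path. -/
def steps (γ : List Pt) : List Pt := List.zipWith (fun a b => b - a) γ γ.tail

/-- The multiset of down steps `(0,-s)`, `s > 0`, of a path. -/
def downSteps (γ : List Pt) : Multiset Pt :=
  Multiset.filter (fun v => v.1 = 0 ∧ v.2 < 0) (steps γ : Multiset Pt)

/-- The multiset of up-right steps of a path. -/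
def upRightSteps (γ : List Pt) : Multiset Pt :=
  Multiset.filter (fun v => 0 < v.1 ∧ 0 < v.2) (steps γ : Multiset Pt)

/-- The path makes a turn of sign `s` at the (interior) index `k`; for left turns
`s = (0 < ·)`, for right turns `s = (· < 0)`. -/
def TurnAt (s : ℤ → Prop) (γ : List Pt) (k : ℕ) : Prop :=
  0 < k ∧ k + 1 < γ.length ∧ s (det (pt γ k - pt γ (k - 1)) (pt γ (k + 1) - pt γ k))

/-- `k` is the first turn of sign `s` of the path. -/
def FirstTurn (s : ℤ → Prop) (γ : List Pt) (k : ℕ) : Prop :=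
  TurnAt s γ k ∧ ∀ j, TurnAt s γ j → k ≤ j

/-- Twice the area of the triangle with vertices `γ(k-1), γ(k), γ(k+1)`. -/
def triArea2 (γ : List Pt) (k : ℕ) : ℕ :=
  (det (pt γ k - pt γ (k - 1)) (pt γ (k + 1) - pt γ k)).natAbs

/-- The path obtained by cutting the corner at index `k`, i.e. deleting the point `γ(k)`. -/
def cut (γ : List Pt) (k : ℕ) : List Pt := γ.eraseIdx k

/-- The path obtained by completing the parallelogram at index `k`, i.e. replacing
`γ(k)` by `γ(k-1) + γ(k+1) - γ(k)`. -/
def push (γ : List Pt) (k : ℕ) : List Pt :=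
  γ.set k (pt γ (k - 1) + pt γ (k + 1) - pt γ k)

/-- All points of the path lie in `Δ`. -/
def Inside (Δ : Set Pt) (γ : List Pt) : Prop := ∀ z ∈ γ, z ∈ Δ

/-- Mikhalkin's multiplicity recursion, as a functional relation: `MultRel Δ Init s γ m`
means that the recursion (performed always at the *first* turn of sign `s`) assigns the
multiplicity `m` to the path `γ`.  Here `Δ` is the set of lattice points of the polygon,
`Init` the set of initial paths (of multiplicity `1`), and `s` the turn sign
(`0 < ·` for left turns / `mult₊`, `· < 0` for right turns / `mult₋`). -/
inductive MultRel (Δ : Set Pt) (Init : List Pt → Prop) (s : ℤ → Prop) : List Pt → ℕ → Prop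
  | init {γ : List Pt} : Init γ → MultRel Δ Init s γ 1
  | noTurn {γ : List Pt} : ¬Init γ → (∀ k, ¬TurnAt s γ k) → MultRel Δ Init s γ 0
  | stepIn {γ : List Pt} {k m' m'' : ℕ} : ¬Init γ → FirstTurn s γ k →
      Inside Δ (push γ k) → MultRel Δ Init s (cut γ k) m' →
      MultRel Δ Init s (push γ k) m'' →
      MultRel Δ Init s γ (triArea2 γ k * m' + m'')
  | stepOut {γ : List Pt} {k m' : ℕ} : ¬Init γ → FirstTurn s γ k →
      ¬Inside Δ (push γ k) → MultRel Δ Init s (cut γ k) m' →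
      MultRel Δ Init s γ (triArea2 γ k * m')

/-- The multiplicity function determined by Mikhalkin's recursion. -/
def multOf (Δ : Set Pt) (Init : List Pt → Prop) (s : ℤ → Prop) (γ : List Pt) : ℕ :=
  if h : ∃ m, MultRel Δ Init s γ m then h.choose else 0

/-- `γ ≺ δ`: the path `δ` is obtained from `γ` by finitely many steps of the multiplicity
recursion (each step cuts the corner at the first turn of sign `s`, or completes the
parallelogram there). -/
inductive Reaches (Δ : Set Pt) (Init : List Pt → Prop) (s : ℤ → Prop) : List Pt → List Pt → Prop
  | refl (γ : List Pt) : Reaches Δ Init s γ γ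
  | cutStep {γ δ : List Pt} {k : ℕ} : ¬Init γ → FirstTurn s γ k →
      Reaches Δ Init s (cut γ k) δ → Reaches Δ Init s γ δ
  | pushStep {γ δ : List Pt} {k : ℕ} : ¬Init γ → FirstTurn s γ k →
      Inside Δ (push γ k) → Reaches Δ Init s (push γ k) δ → Reaches Δ Init s γ δ

/-- The lattice path starting at `p` with the given list of step vectors. -/
def pathFrom : Pt → List Pt → List Pt
  | p, [] => [p]
  | p, v :: vs => p :: pathFrom (p + v) vs

/-- Horizontal (rightward) steps of the given sizes. -/
def hSteps (l : List ℕ) : List Pt := l.map fun k => ((k : ℤ), 0)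

/-- Vertical downward steps of the given sizes. -/
def dSteps (l : List ℕ) : List Pt := l.map fun k => ((0 : ℤ), -(k : ℤ))

/-- A multiset of positive integers is a partition of `t`. -/
def IsPartition (m : Multiset ℕ) (t : ℕ) : Prop := (∀ k ∈ m, 0 < k) ∧ m.sum = t

/-! ## The rectangle `[0,c] × [0,d]` -/

/-- The lattice points of the rectangle with vertices `(0,0), (c,0), (0,d), (c,d)`. -/
def rect (c d : ℕ) : Set Pt := {z | 0 ≤ z.1 ∧ z.1 ≤ (c : ℤ) ∧ 0 ≤ z.2 ∧ z.2 ≤ (d : ℤ)}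

/-- `β₊`-initial paths of the rectangle: from `p = (0,d)` clockwise along the top edge with
step sizes the parts of `μ₂` and then down the right edge with step sizes the parts of `ν₂`. -/
def InitPlusRect (d : ℕ) (μ₂ ν₂ : Multiset ℕ) (γ : List Pt) : Prop :=
  ∃ s t : List ℕ, (s : Multiset ℕ) = μ₂ ∧ (t : Multiset ℕ) = ν₂ ∧
    γ = pathFrom (0, (d : ℤ)) (hSteps s ++ dSteps t)

/-- `β₋`-initial paths of the rectangle: from `p = (0,d)` counterclockwise down the left edge
with step sizes the parts of `ν₁` and then along the bottom edge with step sizes the parts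
of `μ₁`. -/
def InitMinusRect (d : ℕ) (μ₁ ν₁ : Multiset ℕ) (γ : List Pt) : Prop :=
  ∃ s t : List ℕ, (s : Multiset ℕ) = ν₁ ∧ (t : Multiset ℕ) = μ₁ ∧
    γ = pathFrom (0, (d : ℤ)) (dSteps s ++ hSteps t)

/-- `mult₊` for the rectangle with boundary data `(μ₁, μ₂, ν₁, ν₂)`. -/
def multPlusRect (c d : ℕ) (μ₂ ν₂ : Multiset ℕ) : List Pt → ℕ :=
  multOf (rect c d) (InitPlusRect d μ₂ ν₂) (fun x => 0 < x)

/-- `mult₋` for the rectangle with boundary data `(μ₁, μ₂, ν₁, ν₂)`. -/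
def multMinusRect (c d : ℕ) (μ₁ ν₁ : Multiset ℕ) : List Pt → ℕ :=
  multOf (rect c d) (InitMinusRect d μ₁ ν₁) (fun x => x < 0)

/-- `mult = mult₊ · mult₋` for the rectangle with boundary data `(μ₁, μ₂, ν₁, ν₂)`. -/
def multRect (c d : ℕ) (μ₁ μ₂ ν₁ ν₂ : Multiset ℕ) (γ : List Pt) : ℕ :=
  multPlusRect c d μ₂ ν₂ γ * multMinusRect c d μ₁ ν₁ γ

/-- A `λ`-increasing lattice path from `(0,d)` to `(c,0)` contained in the rectangle. -/
def IsPathRect (c d : ℕ) (γ : List Pt) : Prop :=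
  Increasing γ ∧ γ.head? = some (0, (d : ℤ)) ∧ γ.getLast? = some ((c : ℤ), 0) ∧
    Inside (rect c d) γ

/-- The genericity condition: all subset sums of the `xᵢ` are distinct. -/
def Generic {n : ℕ} (x : Fin n → ℕ) : Prop :=
  ∀ I J : Finset (Fin n), I ≠ J → ∑ i ∈ I, x i ≠ ∑ j ∈ J, x j

/-! ## General convex lattice polygons with boundary data -/

/-- The displacement vector of an edge: (lattice length of the edge) times the primitive
direction.  An edge is recorded as a pair (primitive direction, multiset of step lengths
`β_e`, listing each length `k` with multiplicity `β_e(k)`). -/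
def edgeVec (e : Pt × Multiset ℕ) : Pt := ((e.2.sum : ℤ) * e.1.1, (e.2.sum : ℤ) * e.1.2)

/-- The endpoint of a chain of edges starting at `p`. -/
def chainEnd (p : Pt) (l : List (Pt × Multiset ℕ)) : Pt := p + (l.map edgeVec).sum

/-- The successive vertices of a chain of edges starting at `p`. -/
def chainPts : Pt → List (Pt × Multiset ℕ) → List Pt
  | p, [] => [p]
  | p, e :: es => p :: chainPts (p + edgeVec e) es

/-- A convex lattice polygon together with boundary data `β`: it is encoded by its
`λ`-minimal vertex `p`, and its two boundary chains from `p` to the `λ`-maximal vertex `q`,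
the clockwise one `cw` and the counterclockwise one `ccw`.  Each edge carries its primitive
direction and the multiset of step lengths `β_e` (which must sum to the lattice length of
the edge; here the lattice length is *defined* as that sum). -/
structure PolyData where
  /-- the `λ`-minimal vertex -/
  p : Pt
  /-- the clockwise boundary chain from `p` to `q` -/
  cw : List (Pt × Multiset ℕ)
  /-- the counterclockwise boundary chain from `p` to `q` -/
  ccw : List (Pt × Multiset ℕ)
  cw_ne : cw ≠ []
  ccw_ne : ccw ≠ []
  /-- all edge directions are `λ`-positive -/
  cw_lam : ∀ e ∈ cw, lamLT (0, 0) e.1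
  ccw_lam : ∀ e ∈ ccw, lamLT (0, 0) e.1
  /-- edge directions are primitive -/
  cw_prim : ∀ e ∈ cw, Int.gcd e.1.1 e.1.2 = 1
  ccw_prim : ∀ e ∈ ccw, Int.gcd e.1.1 e.1.2 = 1
  /-- the step lengths on each edge are positive, and each edge has positive lattice length -/
  cw_pos : ∀ e ∈ cw, e.2 ≠ 0 ∧ ∀ k ∈ e.2, 0 < k
  ccw_pos : ∀ e ∈ ccw, e.2 ≠ 0 ∧ ∀ k ∈ e.2, 0 < k
  /-- strict convexity: consecutive clockwise edges turn right -/
  cw_conv : (cw.map Prod.fst).Chain' fun u v => det u v < 0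
  /-- strict convexity: consecutive counterclockwise edges turn left -/
  ccw_conv : (ccw.map Prod.fst).Chain' fun u v => 0 < det u v
  /-- the two chains have common endpoint `q` -/
  closes : chainEnd p cw = chainEnd p ccw
  /-- convexity at the vertex `p` -/
  junct_p : ∀ u w : Pt, (cw.map Prod.fst).head? = some u →
    (ccw.map Prod.fst).head? = some w → 0 < det w u
  /-- convexity at the vertex `q` -/
  junct_q : ∀ u w : Pt, (cw.map Prod.fst).getLast? = some u →
    (ccw.map Prod.fst).getLast? = some w → 0 < det u w

/-- The `λ`-maximal vertex of the polygon. -/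
def PolyData.q (P : PolyData) : Pt := chainEnd P.p P.ccw

/-- The canonical embedding `ℤ² → ℝ²`. -/
def toR (z : Pt) : ℝ × ℝ := ((z.1 : ℝ), (z.2 : ℝ))

/-- The set of lattice points of the polygon: all lattice points of the convex hull of the
boundary vertices. -/
def polySet (P : PolyData) : Set Pt :=
  {z | toR z ∈ convexHull ℝ
    (toR '' {w | w ∈ chainPts P.p P.cw ∨ w ∈ chainPts P.p P.ccw})}

/-- `ExpandChain chain s` holds if the list of step vectors `s` traverses the edges of
`chain` in order, taking on each edge `e` exactly `β_e(k)` steps of lattice length `k`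
(in some order). -/
def ExpandChain : List (Pt × Multiset ℕ) → List Pt → Prop
  | [], s => s = []
  | e :: es, s => ∃ (l : List ℕ) (r : List Pt), (l : Multiset ℕ) = e.2 ∧ ExpandChain es r ∧
      s = (l.map fun k => ((k : ℤ) * e.1.1, (k : ℤ) * e.1.2)) ++ r

/-- The initial paths determined by a boundary chain: the paths from `p` to `q` along the
chain whose steps on each edge `e` realize the data `β_e`. -/
def InitChain (p : Pt) (chain : List (Pt × Multiset ℕ)) (γ : List Pt) : Prop :=
  ∃ s, ExpandChain chain s ∧ γ = pathFrom p s

/-- `mult₋` of a path in the polygon `P`. -/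
def multMinusP (P : PolyData) : List Pt → ℕ :=
  multOf (polySet P) (InitChain P.p P.ccw) (fun x => x < 0)

/-- `mult₊` of a path in the polygon `P`. -/
def multPlusP (P : PolyData) : List Pt → ℕ :=
  multOf (polySet P) (InitChain P.p P.cw) (fun x => 0 < x)

/-!
Record a path by its starting point and its list of steps.  At consecutive steps `u, v`, cutting
the corner merges them into `u + v`, and completing the parallelogram swaps them, so the
recursion is the rewriting rule `u v ↦ det u v • (u + v) + v u`, which is the commutation rule of
the Lie bracket `[u, v] = det u v • (u + v)`.  Independence of the chosen turn is confluence of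
this rule.  Turns at disjoint pairs of steps commute, and for three consecutive steps `a b c` the
two ways of reversing them to `c b a` give the same result by the Jacobi identity.  Convexity of
`Δ` ensures that no term of these computations is lost by leaving `Δ`.  The induction is on the
number of pairs of steps forming a left turn; it has to include exchanges of parallel steps,
which do not lower this number, as these arise as degenerate cases of the Jacobi identity.
-/

/-! ### Determinants and `λ`-positive vectors -/

theorem det_swap (u v : Pt) : det v u = -det u v := by
  simp only [det]; ring

theorem det_eq_zero_comm {u v : Pt} : det u v = 0 ↔ det v u = 0 := by
  rw [det_swap, neg_eq_zero]

theorem det_add_left (u v w : Pt) : det (u + v) w = det u w + det v w := by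
  simp only [det, Prod.fst_add, Prod.snd_add]; ring

theorem det_add_right (u v w : Pt) : det u (v + w) = det u v + det u w := by
  simp only [det, Prod.fst_add, Prod.snd_add]; ring

theorem det_smul_smul (k l : ℤ) (u v : Pt) : det (k • u) (l • v) = k * l * det u v := by
  simp only [det, Prod.smul_fst, Prod.smul_snd, smul_eq_mul]; ring

theorem det_smul_eq_add (a b c : Pt) : det a c • b = det a b • c + det b c • a := by
  ext <;> simp [det] <;> ring

theorem lamLT_add_right_iff {p v : Pt} : lamLT p (p + v) ↔ lamLT 0 v := by
  simp [lamLT, eq_comm]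

theorem lamLT_zero_add {u v : Pt} (hu : lamLT 0 u) (hv : lamLT 0 v) : lamLT 0 (u + v) := by
  simp only [lamLT, Prod.fst_add, Prod.snd_add, Prod.fst_zero, Prod.snd_zero] at *
  omega

theorem lamLT_zero_smul_iff {k : ℤ} {v : Pt} (hv : lamLT 0 v) : lamLT 0 (k • v) ↔ 0 < k := by
  simp only [lamLT, Prod.smul_fst, Prod.smul_snd, smul_eq_mul, Prod.fst_zero, Prod.snd_zero] at *
  rcases hv with h | ⟨h, h'⟩
  · have hzero : 0 = k * v.1 ↔ k = 0 := by simp [eq_comm, h.ne']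
    rw [mul_pos_iff_of_pos_right h, hzero]
    exact or_iff_left fun hk => by simp [hk.1] at hk
  · simp [← h, mul_neg_iff, h', h'.not_gt]

theorem det_pos_trans {a b c : Pt} (ha : lamLT 0 a) (hb : lamLT 0 b) (hc : lamLT 0 c)
    (hab : 0 ≤ det a b) (hbc : 0 ≤ det b c) (h : 0 < det a b ∨ 0 < det b c) :
    0 < det a c := by
  rw [← lamLT_zero_smul_iff hb, det_smul_eq_add]
  rcases hab.eq_or_lt with hab | hab <;> rcases hbc.eq_or_lt with hbc | hbc
  · omega
  · simpa [← hab] using (lamLT_zero_smul_iff ha).2 hbc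
  · simpa [← hbc] using (lamLT_zero_smul_iff hc).2 hab
  · exact lamLT_zero_add ((lamLT_zero_smul_iff hc).2 hab) ((lamLT_zero_smul_iff ha).2 hbc)

/-! ### Lattice-convex sets -/

/-- A set of lattice points is lattice-convex if it contains every lattice point of its real
convex hull. -/
def LatticeConvex (Δ : Set Pt) : Prop := ∀ z, toR z ∈ convexHull ℝ (toR '' Δ) → z ∈ Δ

namespace LatticeConvex

variable {Δ : Set Pt} {x a b c : Pt}

theorem mem_of_smul_eq (hΔ : LatticeConvex Δ) {k l m : ℤ} {u v w z : Pt} (hk : 0 ≤ k) (hl : 0 ≤ l)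
    (hm : 0 ≤ m) (hpos : 0 < k + l + m) (hu : u ∈ Δ) (hv : v ∈ Δ) (hw : w ∈ Δ)
    (h : (k + l + m) • z = k • u + l • v + m • w) : z ∈ Δ := by
  apply hΔ
  have hpos' : (0 : ℝ) < k + l + m := mod_cast hpos
  have h₁ : ((k : ℝ) + l + m) * z.1 = k * u.1 + l * v.1 + m * w.1 :=
    mod_cast congrArg Prod.fst h
  have h₂ : ((k : ℝ) + l + m) * z.2 = k * u.2 + l * v.2 + m * w.2 :=
    mod_cast congrArg Prod.snd h
  have hz : toR z = Finset.univ.centerMass ![(k : ℝ), l, m] ![toR u, toR v, toR w] := by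
    rw [Finset.centerMass, eq_inv_smul_iff₀ (by simpa [Fin.sum_univ_three] using hpos'.ne')]
    ext <;> simp [Fin.sum_univ_three, toR, h₁, h₂]
  rw [hz]
  refine Finset.centerMass_mem_convexHull _ ?_ (by simpa [Fin.sum_univ_three] using hpos') ?_
  · simp [Fin.forall_fin_succ, hk, hl, hm]
  · simp only [Finset.mem_univ, forall_const, Fin.forall_fin_succ]
    exact ⟨⟨u, hu, rfl⟩, ⟨v, hv, rfl⟩, ⟨w, hw, rfl⟩, fun i => i.elim0⟩

theorem add_mem_of_det_eq_zero (hΔ : LatticeConvex Δ) {u v : Pt} (hu : lamLT 0 u) (hv : lamLT 0 v)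
    (huv : det u v = 0) (hx : x ∈ Δ) (hxuv : x + (u + v) ∈ Δ) : x + u ∈ Δ := by
  simp only [det, lamLT, Prod.fst_zero, Prod.snd_zero] at huv hu hv
  by_cases hpos : 0 < u.1 + v.1
  · refine hΔ.mem_of_smul_eq (k := v.1) (l := u.1) (m := 0) (by omega) (by omega) le_rfl
      (by omega) hx hxuv hx ?_
    ext <;> simp only [Prod.fst_add, Prod.snd_add, Prod.smul_fst, Prod.smul_snd, smul_eq_mul]
    · ring
    · linear_combination -huv
  · refine hΔ.mem_of_smul_eq (k := -v.2) (l := -u.2) (m := 0) (by omega) (by omega) le_rfl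
      (by omega) hx hxuv hx ?_
    ext <;> simp only [Prod.fst_add, Prod.snd_add, Prod.smul_fst, Prod.smul_snd, smul_eq_mul]
    · linear_combination -huv
    · ring

-- In the next four statements, `x` is the start of three consecutive steps `a, b, c`.

theorem add_middle_mem (hΔ : LatticeConvex Δ) (hab : 0 ≤ det a b) (hbc : 0 ≤ det b c)
    (hac : 0 < det a c) (hx : x ∈ Δ) (hxab : x + a + b ∈ Δ) (hxbc : x + (b + c) ∈ Δ) :
    x + b ∈ Δ := by
  refine hΔ.mem_of_smul_eq hac.le hab hbc (by omega) hx hxbc hxab ?_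
  linear_combination det_smul_eq_add a b c

theorem add_middle_mem_of_det_le (hΔ : LatticeConvex Δ) (hab : 0 ≤ det a b)
    (hac : 0 < det a c) (hle : det a b ≤ det b c) (hx : x ∈ Δ) (hxab : x + a + b ∈ Δ)
    (hxabc : x + a + b + c ∈ Δ) : x + b ∈ Δ := by
  refine hΔ.mem_of_smul_eq hac.le (sub_nonneg.2 hle) hab (by omega) hx hxab hxabc ?_
  ext <;> simp [det] <;> ring

theorem add_outer_mem (hΔ : LatticeConvex Δ) (hab : 0 ≤ det a b) (hbc : 0 ≤ det b c)
    (hac : 0 < det a c) (hxa : x + a ∈ Δ) (hxc : x + c ∈ Δ) (hxabc : x + a + b + c ∈ Δ) :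
    x + c + a ∈ Δ := by
  refine hΔ.mem_of_smul_eq hac.le hab hbc (by omega) hxabc hxa hxc ?_
  ext <;> simp [det] <;> ring

theorem add_outer_mem_of_det_le (hΔ : LatticeConvex Δ) (hbc : 0 ≤ det b c)
    (hac : 0 < det a c) (hle : det b c ≤ det a b) (hx : x ∈ Δ) (hxa : x + a ∈ Δ)
    (hxabc : x + a + b + c ∈ Δ) : x + (a + c) ∈ Δ := by
  refine hΔ.mem_of_smul_eq hac.le (sub_nonneg.2 hle) hbc (by omega) hxabc hxa hx ?_
  ext <;> simp [det] <;> ring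

end LatticeConvex

/-! ### Paths as lists of steps -/

theorem length_pathFrom (o : Pt) (s : List Pt) : (pathFrom o s).length = s.length + 1 := by
  induction s generalizing o with
  | nil => rfl
  | cons v s ih => simp [pathFrom, ih]

theorem pathFrom_inj {o o' : Pt} {s s' : List Pt} :
    pathFrom o s = pathFrom o' s' ↔ o = o' ∧ s = s' := by
  refine ⟨fun h => ?_, fun h => by rw [h.1, h.2]⟩
  induction s generalizing o o' s' with
  | nil => cases s' <;> simp_all [pathFrom, ← List.length_eq_zero_iff, length_pathFrom]
  | cons v s ih =>
    cases s' with
    | nil => simpa [length_pathFrom] using congrArg List.length h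
    | cons v' s' =>
      obtain ⟨rfl, h⟩ := List.cons.inj h
      obtain ⟨hv, rfl⟩ := ih h
      exact ⟨rfl, by rw [add_left_cancel hv]⟩

theorem steps_pathFrom (o : Pt) (s : List Pt) : steps (pathFrom o s) = s := by
  induction s generalizing o with
  | nil => rfl
  | cons v s ih => cases s <;> simp_all [pathFrom, steps]

theorem pathFrom_steps (x : Pt) (γ : List Pt) : pathFrom x (steps (x :: γ)) = x :: γ := by
  induction γ generalizing x with
  | nil => rfl
  | cons y γ ih => simpa [pathFrom, steps] using ih y

theorem pt_pathFrom {o : Pt} {s : List Pt} {k : ℕ} (hk : k ≤ s.length) :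
    pt (pathFrom o s) k = o + (s.take k).sum := by
  induction s generalizing o k with
  | nil => simp_all [pathFrom, pt]
  | cons v s ih =>
    cases k with
    | zero => simp [pathFrom, pt]
    | succ k => simpa [pathFrom, pt, add_assoc] using ih (o := o + v) (by simpa using hk)

theorem increasing_pathFrom {o : Pt} {s : List Pt} :
    Increasing (pathFrom o s) ↔ ∀ v ∈ s, lamLT 0 v := by
  change List.IsChain lamLT _ ↔ _
  induction s generalizing o with
  | nil => simp [pathFrom]
  | cons v s ih => cases s <;> simp_all [pathFrom, lamLT_add_right_iff]

theorem inside_pathFrom_cons {Δ : Set Pt} {o v : Pt} {s : List Pt} :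
    Inside Δ (pathFrom o (v :: s)) ↔ o ∈ Δ ∧ Inside Δ (pathFrom (o + v) s) := by
  simp [Inside, pathFrom]

theorem start_mem_of_inside {Δ : Set Pt} {o : Pt} {s : List Pt} (h : Inside Δ (pathFrom o s)) :
    o ∈ Δ := by
  cases s <;> exact h _ (by simp [pathFrom])

theorem inside_pathFrom_append {Δ : Set Pt} {o : Pt} {A s : List Pt} :
    Inside Δ (pathFrom o (A ++ s)) ↔
      Inside Δ (pathFrom o A) ∧ Inside Δ (pathFrom (o + A.sum) s) := by
  induction A generalizing o with
  | nil => simpa [Inside, pathFrom] using start_mem_of_inside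
  | cons v A ih => simp [inside_pathFrom_cons, ih, add_assoc, and_assoc]

theorem inside_iff_corner {Δ : Set Pt} {o u v : Pt} {A B : List Pt} :
    Inside Δ (pathFrom o (A ++ u :: v :: B)) ↔
      Inside Δ (pathFrom o (A ++ (u + v) :: B)) ∧ o + A.sum + u ∈ Δ := by
  simp only [inside_pathFrom_append, inside_pathFrom_cons, add_assoc]
  tauto

section Corner

variable (o u v : Pt) (A B : List Pt)

theorem det_at_corner :
    det (pt (pathFrom o (A ++ u :: v :: B)) (A.length + 1) -
        pt (pathFrom o (A ++ u :: v :: B)) (A.length + 1 - 1))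
      (pt (pathFrom o (A ++ u :: v :: B)) (A.length + 1 + 1) -
        pt (pathFrom o (A ++ u :: v :: B)) (A.length + 1)) = det u v := by
  rw [pt_pathFrom (by simp), pt_pathFrom (by simp), pt_pathFrom (by simp)]
  simp [List.take_append, List.take_of_length_le, add_assoc]

theorem turnAt_pathFrom {σ : ℤ → Prop} (h : σ (det u v)) :
    TurnAt σ (pathFrom o (A ++ u :: v :: B)) (A.length + 1) :=
  ⟨by omega, by simp [length_pathFrom], by rwa [det_at_corner]⟩

theorem triArea2_pathFrom :
    triArea2 (pathFrom o (A ++ u :: v :: B)) (A.length + 1) = (det u v).natAbs := by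
  rw [triArea2, det_at_corner]

theorem cut_pathFrom :
    cut (pathFrom o (A ++ u :: v :: B)) (A.length + 1) = pathFrom o (A ++ (u + v) :: B) := by
  induction A generalizing o with
  | nil => cases B <;> simp [cut, pathFrom, add_assoc]
  | cons a A ih => simpa [cut, pathFrom] using ih (o + a)

theorem push_pathFrom :
    push (pathFrom o (A ++ u :: v :: B)) (A.length + 1) = pathFrom o (A ++ v :: u :: B) := by
  induction A generalizing o with
  | nil =>
    have hcorner : o + (o + u + v) - (o + u) = o + v := by abel
    cases B <;> simp [push, pt, pathFrom, hcorner, add_right_comm]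
  | cons a A ih => simpa [push, pt, pathFrom] using ih (o + a)

end Corner

theorem exists_pathFrom_of_turnAt {σ : ℤ → Prop} {γ : List Pt} {k : ℕ} (h : TurnAt σ γ k) :
    ∃ o A u v B, γ = pathFrom o (A ++ u :: v :: B) ∧ k = A.length + 1 ∧ σ (det u v) := by
  obtain ⟨hk, hlen, hσ⟩ := h
  obtain ⟨j, rfl⟩ : ∃ j, k = j + 1 := ⟨k - 1, by omega⟩
  obtain ⟨o, s, rfl⟩ : ∃ o s, γ = pathFrom o s := by
    cases γ with
    | nil => simp at hlen
    | cons o γ => exact ⟨o, _, (pathFrom_steps o γ).symm⟩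
  rw [length_pathFrom] at hlen
  have hs : s = s.take j ++ s[j] :: s[j + 1] :: s.drop (j + 2) := by
    rw [← List.drop_eq_getElem_cons, ← List.drop_eq_getElem_cons, List.take_append_drop]
  have hj : j = (s.take j).length := by rw [List.length_take]; omega
  refine ⟨o, s.take j, s[j], s[j + 1], s.drop (j + 2), by rw [← hs], by rw [← hj], ?_⟩
  have hdet := det_at_corner o s[j] s[j + 1] (s.take j) (s.drop (j + 2))
  rw [← hs, ← hj] at hdet
  rwa [← hdet]

/-! ### Inversions -/

/-- The number of pairs of steps, not necessarily consecutive, of which the later one lies to the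
left of the earlier one. -/
def inversions : List Pt → ℕ
  | [] => 0
  | v :: s => s.countP (fun w => 0 < det v w) + inversions s

theorem inversions_swap {u v : Pt} (h : 0 ≤ det u v) (A B : List Pt) :
    inversions (A ++ u :: v :: B) =
      inversions (A ++ v :: u :: B) + if 0 < det u v then 1 else 0 := by
  induction A with
  | nil =>
    have hvu : ¬ 0 < det v u := by rw [det_swap]; omega
    simp only [List.nil_append, inversions, List.countP_cons, decide_eq_true_eq, hvu, if_false]
    omega
  | cons a A ih =>
    simp only [List.cons_append, inversions, ih, List.countP_append, List.countP_cons]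
    omega

theorem countP_det_add_right_le (w u v : Pt) (B : List Pt) :
    ((u + v) :: B).countP (fun z => 0 < det w z) ≤ (u :: v :: B).countP fun z => 0 < det w z := by
  simp only [List.countP_cons, decide_eq_true_eq, det_add_right]
  split_ifs <;> omega

theorem countP_det_add_left_le (u v : Pt) (B : List Pt) :
    B.countP (fun w => 0 < det (u + v) w) ≤
      B.countP (fun w => 0 < det u w) + B.countP fun w => 0 < det v w := by
  induction B with
  | nil => simp
  | cons b B ih =>
    simp only [List.countP_cons, decide_eq_true_eq, det_add_left] at ih ⊢
    split_ifs <;> omega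

theorem inversions_merge (u v : Pt) (A B : List Pt) :
    inversions (A ++ (u + v) :: B) + (if 0 < det u v then 1 else 0) ≤
      inversions (A ++ u :: v :: B) := by
  induction A with
  | nil =>
    have hB := countP_det_add_left_le u v B
    simp only [List.nil_append, inversions, List.countP_cons, decide_eq_true_eq]
    omega
  | cons a A ih =>
    have hB := countP_det_add_right_le a u v B
    simp only [List.cons_append, inversions, List.countP_append]
    omega

/-! ### The multiplicity function -/

section Multiplicity

variable {Δ : Set Pt} {Init : List Pt → Prop} {σ : ℤ → Prop} {γ : List Pt}

theorem exists_firstTurn (h : ∃ k, TurnAt σ γ k) : ∃ k, FirstTurn σ γ k :=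
  ⟨Nat.find h, Nat.find_spec h, fun _ hj => Nat.find_min' h hj⟩

theorem FirstTurn.unique {k l : ℕ} (h : FirstTurn σ γ k) (h' : FirstTurn σ γ l) : k = l :=
  le_antisymm (h.2 _ h'.1) (h'.2 _ h.1)

theorem MultRel.unique {m m' : ℕ} (h : MultRel Δ Init σ γ m) (h' : MultRel Δ Init σ γ m') :
    m = m' := by
  induction h generalizing m' with
  | init hi => cases h' <;> first | rfl | contradiction
  | noTurn hi ht =>
    cases h' with
    | init => contradiction
    | noTurn => rfl
    | stepIn _ hf => exact absurd hf.1 (ht _)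
    | stepOut _ hf => exact absurd hf.1 (ht _)
  | stepIn hi hf hin _ _ ih₁ ih₂ =>
    cases h' with
    | init => contradiction
    | noTurn _ ht => exact absurd hf.1 (ht _)
    | stepIn _ hf' _ h₁' h₂' =>
      obtain rfl := hf.unique hf'
      rw [ih₁ h₁', ih₂ h₂']
    | stepOut _ hf' hin' =>
      obtain rfl := hf.unique hf'
      contradiction
  | stepOut hi hf hin _ ih₁ =>
    cases h' with
    | init => contradiction
    | noTurn _ ht => exact absurd hf.1 (ht _)
    | stepIn _ hf' hin' =>
      obtain rfl := hf.unique hf'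
      contradiction
    | stepOut _ hf' _ h₁' =>
      obtain rfl := hf.unique hf'
      rw [ih₁ h₁']

theorem exists_multRel (Δ : Set Pt) (Init : List Pt → Prop) (γ : List Pt) :
    ∃ m, MultRel Δ Init (fun x => 0 < x) γ m := by
  induction γ using (InvImage.wf (fun γ => inversions (steps γ)) wellFounded_lt).induction with
  | _ γ ih =>
    by_cases hi : Init γ
    · exact ⟨_, .init hi⟩
    by_cases ht : ∃ k, TurnAt (fun x => 0 < x) γ k
    · obtain ⟨k, hk⟩ := exists_firstTurn ht
      obtain ⟨o, A, u, v, B, rfl, rfl, huv⟩ := exists_pathFrom_of_turnAt hk.1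
      have hmerge := inversions_merge u v A B
      have hswap := inversions_swap huv.le A B
      rw [if_pos huv] at hmerge hswap
      simp only [InvImage] at ih
      obtain ⟨m', hm'⟩ := ih (pathFrom o (A ++ (u + v) :: B)) (by
        simp only [steps_pathFrom]; omega)
      obtain ⟨m'', hm''⟩ := ih (pathFrom o (A ++ v :: u :: B)) (by
        simp only [steps_pathFrom]; omega)
      rw [← cut_pathFrom] at hm'
      rw [← push_pathFrom] at hm''
      by_cases hin : Inside Δ (push (pathFrom o (A ++ u :: v :: B)) (A.length + 1))
      · exact ⟨_, .stepIn hi hk hin hm' hm''⟩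
      · exact ⟨_, .stepOut hi hk hin hm'⟩
    · exact ⟨_, .noTurn hi (not_exists.1 ht)⟩

theorem multRel_multOf (Δ : Set Pt) (Init : List Pt → Prop) (γ : List Pt) :
    MultRel Δ Init (fun x => 0 < x) γ (multOf Δ Init (fun x => 0 < x) γ) := by
  have h := exists_multRel Δ Init γ
  rw [multOf, dif_pos h]
  exact h.choose_spec

theorem MultRel.multOf_eq {m : ℕ} (h : MultRel Δ Init (fun x => 0 < x) γ m) :
    multOf Δ Init (fun x => 0 < x) γ = m :=
  (multRel_multOf Δ Init γ).unique h

theorem multOf_eq_of_firstTurn {k : ℕ} (hi : ¬Init γ) (hk : FirstTurn (fun x => 0 < x) γ k) :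
    multOf Δ Init (fun x => 0 < x) γ =
      triArea2 γ k * multOf Δ Init (fun x => 0 < x) (cut γ k) +
        if Inside Δ (push γ k) then multOf Δ Init (fun x => 0 < x) (push γ k) else 0 := by
  split_ifs with hin
  · exact (MultRel.stepIn hi hk hin (multRel_multOf ..) (multRel_multOf ..)).multOf_eq
  · exact (MultRel.stepOut hi hk hin (multRel_multOf ..)).multOf_eq

theorem multOf_eq_of_forall_not_turnAt (h : ∀ k, ¬TurnAt (fun x => 0 < x) γ k) :
    multOf Δ Init (fun x => 0 < x) γ = if Init γ then 1 else 0 := by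
  split_ifs with hi
  · exact (MultRel.init hi).multOf_eq
  · exact (MultRel.noTurn hi h).multOf_eq

end Multiplicity

/-! ### Exchanging consecutive steps -/

section Exchange

variable {N : List Pt → ℤ} {A B C : List Pt} {a b c u v : Pt}

/-- The right-hand side of the recursion at the consecutive steps `u, v` between `A` and `B`, for a
function `N` of lists of steps. -/
def exchangeSum (N : List Pt → ℤ) (A : List Pt) (u v : Pt) (B : List Pt) : ℤ :=
  det u v * N (A ++ (u + v) :: B) + N (A ++ v :: u :: B)

/-- `N` satisfies the recursion at the consecutive steps `u, v` between `A` and `B`.  The sign of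
`det u v` is arbitrary, so that this is symmetric in `u` and `v`. -/
def ExchangeAt (N : List Pt → ℤ) (A : List Pt) (u v : Pt) (B : List Pt) : Prop :=
  N (A ++ u :: v :: B) = exchangeSum N A u v B

theorem ExchangeAt.symm (h : ExchangeAt N A u v B) : ExchangeAt N A v u B := by
  simp only [ExchangeAt, exchangeSum] at *
  rw [h, det_swap u v, add_comm v u]
  ring

-- The two sides are the two ways of reversing `a b c` to `c b a`.
theorem exchangeSum_hexagon (hab_c : ExchangeAt N A (a + b) c B)
    (hac : ExchangeAt N (A ++ [b]) a c B) (hbc : ExchangeAt N A b c (a :: B))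
    (hb_ac : ExchangeAt N A b (a + c) B) (ha_bc : ExchangeAt N A a (b + c) B)
    (hac' : ExchangeAt N A a c (b :: B)) (hab : ExchangeAt N (A ++ [c]) a b B) :
    exchangeSum N A a b (c :: B) = exchangeSum N (A ++ [a]) b c B := by
  simp only [ExchangeAt, exchangeSum, List.append_assoc, List.singleton_append] at *
  rw [hab_c, hac, hbc, hb_ac, ha_bc, hac', hab]
  simp only [det_add_left, det_add_right, det_swap a b, add_left_comm b a c, add_assoc a b c]
  ring

theorem exchangeSum_square {u' v' : Pt}
    (h₁ : ExchangeAt N (A ++ (u + v) :: C) u' v' B)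
    (h₂ : ExchangeAt N (A ++ v :: u :: C) u' v' B)
    (h₃ : ExchangeAt N A u v (C ++ (u' + v') :: B))
    (h₄ : ExchangeAt N A u v (C ++ v' :: u' :: B)) :
    exchangeSum N A u v (C ++ u' :: v' :: B) = exchangeSum N (A ++ u :: v :: C) u' v' B := by
  simp only [ExchangeAt, exchangeSum, List.append_assoc, List.cons_append] at *
  rw [h₁, h₂, h₃, h₄]
  ring

end Exchange

/-! ### Two turns of the same path -/

/-- The induction hypothesis of the confluence argument: `N` satisfies the recursion at all pairs of
consecutive steps, of paths from `o` with `λ`-positive steps, that have rank less than `r`.  The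
rank is such that exchanging parallel steps counts more than any exchange in a path with the same
number of inversions, but less than one in a path with more of them.  The condition on `Δ` says that
the path itself is in `Δ` if the path with the corner cut is. -/
def ExchangesBelow (Δ : Set Pt) (o : Pt) (N : List Pt → ℤ) (r : ℕ) : Prop :=
  ∀ A u v B, (A ++ u :: v :: B).Forall (lamLT 0) → 0 ≤ det u v →
    (Inside Δ (pathFrom o (A ++ (u + v) :: B)) → o + A.sum + u ∈ Δ) →
    2 * inversions (A ++ u :: v :: B) + (if det u v = 0 then 1 else 0) < r → ExchangeAt N A u v B

section Confluence

variable {Δ : Set Pt} {o a b c : Pt} {A B C : List Pt} {N : List Pt → ℤ} {r : ℕ}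

theorem inside_three_iff : Inside Δ (pathFrom o (A ++ a :: b :: c :: B)) ↔
      Inside Δ (pathFrom o A) ∧ o + A.sum ∈ Δ ∧ o + A.sum + a ∈ Δ ∧ o + A.sum + a + b ∈ Δ ∧
        Inside Δ (pathFrom (o + A.sum + a + b + c) B) := by
  simp only [inside_pathFrom_append, inside_pathFrom_cons]

theorem ExchangesBelow.middle (hN : ExchangesBelow Δ o N r) (hΔ : LatticeConvex Δ)
    (hpos : (A ++ a :: b :: c :: B).Forall (lamLT 0))
    (hin : Inside Δ (pathFrom o (A ++ a :: b :: c :: B)))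
    (hab : 0 ≤ det a b) (hbc : 0 ≤ det b c) (hac : 0 < det a c)
    (hr : 2 * inversions (A ++ a :: b :: c :: B) ≤ r) : ExchangeAt N A b (a + c) B := by
  simp only [List.forall_append, List.forall_cons] at hpos
  simp only [inside_three_iff] at hin
  obtain ⟨hA, ha, hb, hc, hB⟩ := hpos
  obtain ⟨-, hx, hxa, hxab, hxB⟩ := hin
  have hxabc := start_mem_of_inside hxB
  have hac_pos := lamLT_zero_add ha hc
  have hdet : det b (a + c) = det b c - det a b := by rw [det_add_right, det_swap a b]; ring
  have inv_bac := inversions_swap hab A (c :: B)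
  have inv_acb := inversions_swap hbc (A ++ [a]) B
  have inv_b_ac := inversions_merge a c (A ++ [b]) B
  have inv_ac_b := inversions_merge a c A (b :: B)
  simp only [List.append_assoc, List.singleton_append, if_pos hac] at *
  -- Exchanging `b` and `a + c` adds or removes an inversion, depending on the sign of
  -- `det b c - det a b`.
  rcases le_total (det a b) (det b c) with hle | hle
  · have hxb := hΔ.add_middle_mem_of_det_le hab hac hle hx hxab hxabc
    exact hN A b (a + c) B (by simp [*]) (by omega) (fun _ => hxb) (by split_ifs <;> omega)
  · have hxac := hΔ.add_outer_mem_of_det_le hbc hac hle hx hxa hxabc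
    have hdet' := det_swap b (a + c)
    exact (hN A (a + c) b B (by simp [*]) (by omega) (fun _ => hxac) (by split_ifs <;> omega)).symm

theorem ExchangesBelow.exchangeSum_adjacent (hN : ExchangesBelow Δ o N r) (hΔ : LatticeConvex Δ)
    (hpos : (A ++ a :: b :: c :: B).Forall (lamLT 0))
    (hin : Inside Δ (pathFrom o (A ++ a :: b :: c :: B)))
    (hab : 0 ≤ det a b) (hbc : 0 ≤ det b c) (h : 0 < det a b ∨ 0 < det b c)
    (hr : 2 * inversions (A ++ a :: b :: c :: B) ≤ r)
    (hr' : det a b = 0 ∨ det b c = 0 → 2 * inversions (A ++ a :: b :: c :: B) < r) :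
    exchangeSum N A a b (c :: B) = exchangeSum N (A ++ [a]) b c B := by
  have hmiddle := fun hac => hN.middle hΔ hpos hin hab hbc hac hr
  simp only [List.forall_append, List.forall_cons] at hpos
  simp only [inside_three_iff] at hin
  obtain ⟨hA, ha, hb, hc, hB⟩ := hpos
  obtain ⟨-, hx, hxa, hxab, hxB⟩ := hin
  have hxabc := start_mem_of_inside hxB
  have hac := det_pos_trans ha hb hc hab hbc h
  have hab_pos := lamLT_zero_add ha hb
  have hbc_pos := lamLT_zero_add hb hc
  have hab_c := det_add_left a b c
  have ha_bc := det_add_right a b c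
  have inv_bac := inversions_swap hab A (c :: B)
  have inv_bca := inversions_swap hac.le (A ++ [b]) B
  have inv_acb := inversions_swap hbc (A ++ [a]) B
  have inv_cab := inversions_swap hac.le A (b :: B)
  have inv_ab_c := inversions_merge a b A (c :: B)
  have inv_a_bc := inversions_merge b c (A ++ [a]) B
  simp only [List.append_assoc, List.singleton_append, if_pos hac] at *
  refine exchangeSum_hexagon ?_ ?_ ?_ (hmiddle hac) ?_ ?_ ?_
  · refine hN _ _ _ _ (by simp [*]) (by omega) (fun _ => ?_) (by split_ifs at * <;> omega)
    rwa [← add_assoc]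
  · refine hN _ _ _ _ (by simp [*]) hac.le (fun _ => ?_) (by
      rw [← List.append_cons]; split_ifs at * <;> omega)
    simpa [add_assoc, add_comm b a] using hxab
  · refine hN _ _ _ _ (by simp [*]) hbc (fun hcut => ?_) (by split_ifs at * <;> omega)
    have hxbc := start_mem_of_inside (inside_pathFrom_cons.1 (inside_pathFrom_append.1 hcut).2).2
    exact hΔ.add_middle_mem hab hbc hac hx hxab hxbc
  · exact hN _ _ _ _ (by simp [*]) (by omega) (fun _ => hxa) (by split_ifs at * <;> omega)
  · exact hN _ _ _ _ (by simp [*]) hac.le (fun _ => hxa) (by split_ifs at * <;> omega)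
  · refine hN _ _ _ _ (by simp [*]) hab (fun hcut => ?_) (by
      rw [← List.append_cons]; split_ifs at * <;> omega)
    have hxc := start_mem_of_inside (inside_pathFrom_append.1 hcut).2
    simp only [List.sum_append, List.sum_singleton, ← add_assoc] at hxc ⊢
    exact hΔ.add_outer_mem hab hbc hac hxa hxc hxabc

theorem ExchangesBelow.exchangeSum_disjoint {u v u' v' : Pt} (hN : ExchangesBelow Δ o N r)
    (hpos : (A ++ u :: v :: (C ++ u' :: v' :: B)).Forall (lamLT 0))
    (hin : Inside Δ (pathFrom o (A ++ u :: v :: (C ++ u' :: v' :: B))))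
    (h₁ : 0 ≤ det u v) (h₂ : 0 ≤ det u' v') (h : 0 < det u v ∨ 0 < det u' v')
    (hr : 2 * inversions (A ++ u :: v :: (C ++ u' :: v' :: B)) ≤ r)
    (hr' : det u v = 0 ∨ det u' v' = 0 →
      2 * inversions (A ++ u :: v :: (C ++ u' :: v' :: B)) < r) :
    exchangeSum N A u v (C ++ u' :: v' :: B) = exchangeSum N (A ++ u :: v :: C) u' v' B := by
  simp only [List.forall_append, List.forall_cons] at hpos
  simp only [inside_pathFrom_append, inside_pathFrom_cons] at hin
  obtain ⟨hA, hu, hv, hC, hu', hv', hB⟩ := hpos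
  obtain ⟨-, -, hxu, -, -, hyu', -⟩ := hin
  have huv_pos := lamLT_zero_add hu hv
  have huv_pos' := lamLT_zero_add hu' hv'
  have inv_swap₁ := inversions_swap h₁ A (C ++ u' :: v' :: B)
  have inv_merge₁ := inversions_merge u v A (C ++ u' :: v' :: B)
  have inv_swap₂ := inversions_swap h₂ (A ++ u :: v :: C) B
  have inv_merge₂ := inversions_merge u' v' (A ++ u :: v :: C) B
  simp only [List.append_assoc, List.cons_append] at *
  refine exchangeSum_square ?_ ?_ ?_ ?_
  · refine hN _ _ _ _ (by simp [*]) h₂ (fun _ => ?_) (by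
      simp only [List.append_assoc, List.cons_append]
      split_ifs at * <;> omega)
    simpa [add_assoc] using hyu'
  · refine hN _ _ _ _ (by simp [*]) h₂ (fun _ => ?_) (by
      simp only [List.append_assoc, List.cons_append]
      split_ifs at * <;> omega)
    simpa [add_assoc, add_left_comm] using hyu'
  · exact hN _ _ _ _ (by simp [*]) h₁ (fun _ => hxu) (by split_ifs at * <;> omega)
  · exact hN _ _ _ _ (by simp [*]) h₁ (fun _ => hxu) (by split_ifs at * <;> omega)

theorem ExchangesBelow.exchangeSum_append {B' D : List Pt} {u v u' v' : Pt}
    (hN : ExchangesBelow Δ o N r) (hΔ : LatticeConvex Δ)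
    (hpos : (A ++ u :: v :: B).Forall (lamLT 0)) (hin : Inside Δ (pathFrom o (A ++ u :: v :: B)))
    (hB : u :: v :: B = D ++ u' :: v' :: B')
    (h₁ : 0 ≤ det u v) (h₂ : 0 ≤ det u' v') (h : 0 < det u v ∨ 0 < det u' v')
    (hr : 2 * inversions (A ++ u :: v :: B) ≤ r)
    (hr' : det u v = 0 ∨ det u' v' = 0 → 2 * inversions (A ++ u :: v :: B) < r) :
    exchangeSum N A u v B = exchangeSum N (A ++ D) u' v' B' := by
  rcases D with _ | ⟨d, _ | ⟨d', C⟩⟩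
  · obtain ⟨rfl, rfl, rfl⟩ : u = u' ∧ v = v' ∧ B = B' := by simpa using hB
    rw [List.append_nil]
  · obtain ⟨rfl, rfl, rfl⟩ : u = d ∧ v = u' ∧ B = v' :: B' := by simpa using hB
    exact hN.exchangeSum_adjacent hΔ hpos hin h₁ h₂ h hr hr'
  · obtain ⟨rfl, rfl, rfl⟩ : u = d ∧ v = d' ∧ B = C ++ u' :: v' :: B' := by simpa using hB
    exact hN.exchangeSum_disjoint hpos hin h₁ h₂ h hr hr'

theorem ExchangesBelow.exchangeSum_eq {A' B' : List Pt} {u v u' v' : Pt}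
    (hN : ExchangesBelow Δ o N r) (hΔ : LatticeConvex Δ)
    (hpos : (A ++ u :: v :: B).Forall (lamLT 0)) (hin : Inside Δ (pathFrom o (A ++ u :: v :: B)))
    (heq : A ++ u :: v :: B = A' ++ u' :: v' :: B')
    (h₁ : 0 ≤ det u v) (h₂ : 0 < det u' v')
    (hr : 2 * inversions (A ++ u :: v :: B) + (if det u v = 0 then 1 else 0) ≤ r) :
    exchangeSum N A u v B = exchangeSum N A' u' v' B' := by
  have hr₁ : 2 * inversions (A ++ u :: v :: B) ≤ r := by omega
  have hr₂ : det u v = 0 ∨ det u' v' = 0 → 2 * inversions (A ++ u :: v :: B) < r := by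
    split_ifs at hr <;> omega
  rcases List.append_eq_append_iff.1 heq with ⟨D, rfl, hB⟩ | ⟨D, rfl, hB⟩
  · exact hN.exchangeSum_append hΔ hpos hin hB h₁ h₂.le (.inr h₂) hr₁ hr₂
  · rw [heq] at hpos hin hr₁ hr₂
    exact (hN.exchangeSum_append hΔ hpos hin hB h₂.le h₁ (.inl h₂) hr₁ (hr₂ ·.symm)).symm

end Confluence

/-! ### The recursion at an arbitrary left turn -/

/-- The two properties of a set of initial paths on which the recursion at arbitrary turns depends:
they make no left turn, and exchanging parallel steps preserves them. -/
structure InitialPaths (Init : List Pt → Prop) : Prop where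
  det_nonpos {o A u v B} : Init (pathFrom o (A ++ u :: v :: B)) → det u v ≤ 0
  swap {o A u v B} : Init (pathFrom o (A ++ u :: v :: B)) → det u v = 0 →
    Init (pathFrom o (A ++ v :: u :: B))

section AnyTurn

variable {Δ : Set Pt} {Init : List Pt → Prop} {o u v : Pt} {A B s : List Pt} {r : ℕ}

/-- The multiplicity as a function of the steps of a path from `o`, extended by zero to the paths
that leave `Δ`; this absorbs the case distinction in the recursion. -/
def insideMult (Δ : Set Pt) (Init : List Pt → Prop) (o : Pt) (s : List Pt) : ℤ :=
  if Inside Δ (pathFrom o s) then (multOf Δ Init (fun x => 0 < x) (pathFrom o s) : ℤ) else 0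

theorem exists_turnAt_pathFrom_iff {σ : ℤ → Prop} :
    (∃ k, TurnAt σ (pathFrom o s) k) ↔ ∃ A u v B, s = A ++ u :: v :: B ∧ σ (det u v) := by
  constructor
  · rintro ⟨k, hk⟩
    obtain ⟨o', A, u, v, B, heq, -, huv⟩ := exists_pathFrom_of_turnAt hk
    exact ⟨A, u, v, B, (pathFrom_inj.1 heq).2, huv⟩
  · rintro ⟨A, u, v, B, rfl, huv⟩
    exact ⟨_, turnAt_pathFrom o u v A B huv⟩

theorem InitialPaths.not_init (hI : InitialPaths Init)
    (h : ∃ k, TurnAt (fun x => 0 < x) (pathFrom o s) k) : ¬Init (pathFrom o s) := by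
  obtain ⟨A, u, v, B, rfl, huv⟩ := exists_turnAt_pathFrom_iff.1 h
  exact fun hinit => (hI.det_nonpos hinit).not_gt huv

theorem exists_exchangeAt_insideMult (hinit : ¬Init (pathFrom o s)) (hin : Inside Δ (pathFrom o s))
    (h : ∃ k, TurnAt (fun x => 0 < x) (pathFrom o s) k) :
    ∃ A u v B, s = A ++ u :: v :: B ∧ 0 < det u v ∧ ExchangeAt (insideMult Δ Init o) A u v B := by
  obtain ⟨k, hk⟩ := exists_firstTurn h
  obtain ⟨o', A, u, v, B, heq, rfl, huv⟩ := exists_pathFrom_of_turnAt hk.1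
  obtain ⟨rfl, rfl⟩ := pathFrom_inj.1 heq
  refine ⟨A, u, v, B, rfl, huv, ?_⟩
  have hrec := multOf_eq_of_firstTurn (Δ := Δ) hinit hk
  rw [cut_pathFrom, push_pathFrom, triArea2_pathFrom] at hrec
  rw [ExchangeAt, exchangeSum, insideMult, insideMult, insideMult, if_pos hin,
    if_pos (inside_iff_corner.1 hin).1, hrec]
  push_cast
  rw [abs_of_pos huv]

theorem ExchangesBelow.exchangeAt_of_turnAt
    (hN : ExchangesBelow Δ o (insideMult Δ Init o) r) (hΔ : LatticeConvex Δ)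
    (hI : InitialPaths Init) (hpos : (A ++ u :: v :: B).Forall (lamLT 0))
    (hin : Inside Δ (pathFrom o (A ++ u :: v :: B))) (huv : 0 ≤ det u v)
    (hr : 2 * inversions (A ++ u :: v :: B) + (if det u v = 0 then 1 else 0) ≤ r)
    (h : ∃ k, TurnAt (fun x => 0 < x) (pathFrom o (A ++ u :: v :: B)) k) :
    ExchangeAt (insideMult Δ Init o) A u v B := by
  obtain ⟨A', u', v', B', heq, huv', hexch⟩ :=
    exists_exchangeAt_insideMult (hI.not_init h) hin h
  rw [ExchangeAt, hN.exchangeSum_eq hΔ hpos hin heq huv huv' hr, heq]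
  exact hexch

theorem exchangeAt_of_not_turnAt (hI : InitialPaths Init) (huv : det u v = 0)
    (hin : Inside Δ (pathFrom o (A ++ u :: v :: B)))
    (hin' : Inside Δ (pathFrom o (A ++ v :: u :: B)))
    (h : ¬∃ k, TurnAt (fun x => 0 < x) (pathFrom o (A ++ u :: v :: B)) k)
    (h' : ¬∃ k, TurnAt (fun x => 0 < x) (pathFrom o (A ++ v :: u :: B)) k) :
    ExchangeAt (insideMult Δ Init o) A u v B := by
  have hvu := det_eq_zero_comm.1 huv
  have hinit : Init (pathFrom o (A ++ u :: v :: B)) ↔ Init (pathFrom o (A ++ v :: u :: B)) :=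
    ⟨fun hu => hI.swap hu huv, fun hv => hI.swap hv hvu⟩
  rw [ExchangeAt, exchangeSum, huv, zero_mul, zero_add, insideMult, insideMult, if_pos hin,
    if_pos hin', multOf_eq_of_forall_not_turnAt (not_exists.1 h),
    multOf_eq_of_forall_not_turnAt (not_exists.1 h')]
  simp only [hinit]

theorem exchangeAt_of_not_inside (h : ¬Inside Δ (pathFrom o (A ++ (u + v) :: B))) :
    ExchangeAt (insideMult Δ Init o) A u v B := by
  have h₁ : ¬Inside Δ (pathFrom o (A ++ u :: v :: B)) := fun hin => h (inside_iff_corner.1 hin).1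
  have h₂ : ¬Inside Δ (pathFrom o (A ++ v :: u :: B)) := fun hin =>
    h (add_comm u v ▸ (inside_iff_corner.1 hin).1)
  simp [ExchangeAt, exchangeSum, insideMult, h, h₁, h₂]

theorem Inside.swap_of_det_eq_zero (hin : Inside Δ (pathFrom o (A ++ u :: v :: B)))
    (hΔ : LatticeConvex Δ) (hpos : (A ++ u :: v :: B).Forall (lamLT 0)) (huv : det u v = 0) :
    Inside Δ (pathFrom o (A ++ v :: u :: B)) := by
  have hvu := det_eq_zero_comm.1 huv
  obtain ⟨-, hu, hv, -⟩ : _ ∧ lamLT 0 u ∧ lamLT 0 v ∧ _ := by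
    simpa only [List.forall_append, List.forall_cons] using hpos
  have hcut := add_comm u v ▸ (inside_iff_corner.1 hin).1
  have htail := inside_pathFrom_cons.1 (inside_pathFrom_append.1 hcut).2
  exact inside_iff_corner.2
    ⟨hcut, hΔ.add_mem_of_det_eq_zero hv hu hvu htail.1 (start_mem_of_inside htail.2)⟩

theorem exchangesBelow_insideMult (hΔ : LatticeConvex Δ) (hI : InitialPaths Init) (o : Pt)
    (r : ℕ) : ExchangesBelow Δ o (insideMult Δ Init o) r := by
  induction r with
  | zero => exact fun A u v B _ _ _ h => absurd h (Nat.not_lt_zero _)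
  | succ r ih =>
    intro A u v B hpos huv hcorner hr
    rw [Nat.lt_succ_iff] at hr
    by_cases hcut : Inside Δ (pathFrom o (A ++ (u + v) :: B))
    swap
    · exact exchangeAt_of_not_inside hcut
    have hin := inside_iff_corner.2 ⟨hcut, hcorner hcut⟩
    by_cases hturn : ∃ k, TurnAt (fun x => 0 < x) (pathFrom o (A ++ u :: v :: B)) k
    · exact ih.exchangeAt_of_turnAt hΔ hI hpos hin huv hr hturn
    have huv₀ : det u v = 0 := huv.antisymm' <| not_lt.1 fun h =>
      hturn ⟨_, turnAt_pathFrom o u v A B h⟩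
    have hvu₀ := det_eq_zero_comm.1 huv₀
    have hpos' : (A ++ v :: u :: B).Forall (lamLT 0) := by
      simp only [List.forall_append, List.forall_cons] at hpos ⊢
      tauto
    have hin' := hin.swap_of_det_eq_zero hΔ hpos huv₀
    by_cases hturn' : ∃ k, TurnAt (fun x => 0 < x) (pathFrom o (A ++ v :: u :: B)) k
    · have hinv := inversions_swap huv A B
      refine (ih.exchangeAt_of_turnAt hΔ hI hpos' hin' hvu₀.ge ?_ hturn').symm
      simp_all
    · exact exchangeAt_of_not_turnAt hI huv₀ hin hin' hturn hturn'

theorem multPlus_any_left_turn_general (hΔ : LatticeConvex Δ) (hI : InitialPaths Init)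
    {γ : List Pt} (hinc : Increasing γ) (hin : Inside Δ γ) {k : ℕ}
    (hk : TurnAt (fun x => 0 < x) γ k) :
    multOf Δ Init (fun x => 0 < x) γ =
      triArea2 γ k * multOf Δ Init (fun x => 0 < x) (cut γ k) +
        if Inside Δ (push γ k) then multOf Δ Init (fun x => 0 < x) (push γ k) else 0 := by
  obtain ⟨o, A, u, v, B, rfl, rfl, huv⟩ := exists_pathFrom_of_turnAt hk
  have hcorner := inside_iff_corner.1 hin
  have hpos := List.forall_iff_forall_mem.2 (increasing_pathFrom.1 hinc)
  have hexch := exchangesBelow_insideMult hΔ hI o _ A u v B hpos huv.le (fun _ => hcorner.2)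
    (Nat.lt_succ_self _)
  rw [ExchangeAt, exchangeSum, insideMult, insideMult, insideMult, if_pos hin, if_pos hcorner.1]
    at hexch
  rw [cut_pathFrom, push_pathFrom, triArea2_pathFrom]
  zify
  rwa [abs_of_pos huv]

end AnyTurn

/-! ### Polygons -/

theorem latticeConvex_polySet (P : PolyData) : LatticeConvex (polySet P) := fun _ hz =>
  convexHull_min (Set.image_subset_iff.2 fun _ hw => hw) (convex_convexHull ℝ _) hz

theorem append_cons_cons_eq_append_iff {α : Type*} {u v : α} {A B L R : List α} :
    A ++ u :: v :: B = L ++ R ↔ (∃ C, L = A ++ u :: v :: C ∧ B = C ++ R) ∨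
      (L = A ++ [u] ∧ R = v :: B) ∨ ∃ D, A = L ++ D ∧ R = D ++ u :: v :: B := by
  constructor
  · rw [List.append_eq_append_iff]
    rintro (⟨D, rfl, hR⟩ | h)
    · rcases D with _ | ⟨u', _ | ⟨v', C⟩⟩ <;> simp_all
    · exact .inr (.inr h)
  · rintro (⟨C, rfl, rfl⟩ | ⟨rfl, rfl⟩ | ⟨D, rfl, rfl⟩) <;> simp

section Boundary

variable {e : Pt × Multiset ℕ} {es chain : List (Pt × Multiset ℕ)} {A B s : List Pt} {u v : Pt}

theorem expandChain_cons_iff :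
    ExpandChain (e :: es) s ↔ ∃ (l : List ℕ) (r : List Pt), (l : Multiset ℕ) = e.2 ∧
      ExpandChain es r ∧ s = (l.map fun k : ℕ => (k : ℤ) • e.1) ++ r := by
  have hsmul (k : ℕ) : (k : ℤ) • e.1 = ((k : ℤ) * e.1.1, (k : ℤ) * e.1.2) := rfl
  simp only [ExpandChain, hsmul, List.bind_eq_flatMap, List.pure_def, ← List.map_eq_flatMap,
    List.map_map, Function.comp_def]

theorem ExpandChain.exists_eq_smul (h : ExpandChain (e :: es) (v :: s))
    (he : e.2 ≠ 0 ∧ ∀ k ∈ e.2, 0 < k) : ∃ k : ℤ, 0 < k ∧ v = k • e.1 := by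
  obtain ⟨_ | ⟨k, l⟩, r, hl, -, hs⟩ := expandChain_cons_iff.1 h
  · exact absurd hl.symm he.1
  · exact ⟨k, mod_cast he.2 k (by simp [← hl]), (List.cons.inj hs).1⟩

theorem ExpandChain.det_neg_or_swap (h : ExpandChain chain (A ++ u :: v :: B))
    (hpos : ∀ e ∈ chain, e.2 ≠ 0 ∧ ∀ k ∈ e.2, 0 < k)
    (hconv : (chain.map Prod.fst).IsChain fun d d' => det d d' < 0) :
    det u v < 0 ∨ det u v = 0 ∧ ExpandChain chain (A ++ v :: u :: B) := by
  induction chain generalizing A with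
  | nil => simp [ExpandChain] at h
  | cons e es ih =>
    rw [List.forall_mem_cons] at hpos
    obtain ⟨l, r, hl, hr, hs⟩ := expandChain_cons_iff.1 h
    rcases append_cons_cons_eq_append_iff.1 hs with
      ⟨C, hL, rfl⟩ | ⟨hL, rfl⟩ | ⟨D, rfl, rfl⟩
    · obtain ⟨lA, _, rfl, rfl, huv⟩ := List.map_eq_append_iff.1 hL
      obtain ⟨j, _, rfl, rfl, hv⟩ := List.map_eq_cons_iff.1 huv
      obtain ⟨k, lC, rfl, rfl, rfl⟩ := List.map_eq_cons_iff.1 hv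
      refine .inr ⟨by rw [det_smul_smul]; simp [det, mul_comm], ?_⟩
      refine expandChain_cons_iff.2 ⟨lA ++ k :: j :: lC, r, ?_, hr, by simp⟩
      rw [← hl, Multiset.coe_eq_coe]
      exact (List.Perm.swap j k lC).append_left lA
    · obtain ⟨lA, _, rfl, -, hu⟩ := List.map_eq_append_iff.1 hL
      obtain ⟨j, _, rfl, rfl, -⟩ := List.map_eq_cons_iff.1 hu
      have hj : 0 < j := hpos.1.2 j (by simp [← hl])
      cases es with
      | nil => simp [ExpandChain] at hr
      | cons e' es =>
        obtain ⟨k, hk, rfl⟩ := hr.exists_eq_smul (hpos.2 _ List.mem_cons_self)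
        have hdet : det e.1 e'.1 < 0 := (List.isChain_cons_cons.1 hconv).1
        rw [det_smul_smul]
        exact .inl (mul_neg_of_pos_of_neg (by positivity) hdet)
    · refine (ih hr hpos.2 hconv.tail).imp_right fun ⟨huv, hswap⟩ => ⟨huv, ?_⟩
      exact expandChain_cons_iff.2 ⟨l, _, hl, hswap, List.append_assoc ..⟩

theorem initialPaths_initChain (p : Pt) (hpos : ∀ e ∈ chain, e.2 ≠ 0 ∧ ∀ k ∈ e.2, 0 < k)
    (hconv : (chain.map Prod.fst).IsChain fun d d' => det d d' < 0) :
    InitialPaths (InitChain p chain) where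
  det_nonpos := by
    rintro o A u v B ⟨s, hs, heq⟩
    obtain ⟨rfl, rfl⟩ := pathFrom_inj.1 heq
    exact (hs.det_neg_or_swap hpos hconv).elim le_of_lt fun h => h.1.le
  swap := by
    rintro o A u v B ⟨s, hs, heq⟩ huv
    obtain ⟨rfl, rfl⟩ := pathFrom_inj.1 heq
    exact ⟨_, ((hs.det_neg_or_swap hpos hconv).resolve_left huv.not_lt).2, rfl⟩

end Boundary

/-- The positive multiplicity recursion may be performed at *any* left
turn, not necessarily the first one. -/
theorem multPlus_any_left_turn (P : PolyData) (γ : List Pt)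
    (hinc : Increasing γ)
    (hfrom : γ.head? = some P.p) (hto : γ.getLast? = some P.q)
    (hin : Inside (polySet P) γ)
    (hninit : ¬InitChain P.p P.cw γ)
    (k : ℕ) (hk : TurnAt (fun x => 0 < x) γ k) :
    multPlusP P γ = triArea2 γ k * multPlusP P (cut γ k) +
      (if Inside (polySet P) (push γ k) then multPlusP P (push γ k) else 0) :=
  multPlus_any_left_turn_general (latticeConvex_polySet P)
    (initialPaths_initChain P.p P.cw_pos P.cw_conv) hinc hin hk

end TropPaths
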